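/- arXiv:2402.05017 — 2 statements merged into one kernel-verified Lean document; each statement's English description precedes it below -/
import Mathlib

section
/- If a nonnegative sequence (a_k)_{k=0}^∞ is a TP_∞-preserver, then for every c > 0 with c ≠ 1, the sequence ( ((c^{k} − 1)/(c − 1)) · a_k )_{k=0}^∞ (the coefficient sequence of (A(z) − A(cz))/(1 − c), where A(z) = ∑ a_k z^k) is a totally positive sequence. -/
/-- A real sequence `(a_k)` is totally positive (TP_∞) if all finite minors of the
infinite Toeplitz matrix `(a_{j-i})` (with `a_k = 0` for `k < 0`) are nonnegative. -/
def IsTotallyPositive (a : ℕ → ℝ) : Prop :=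
  ∀ (n : ℕ) (i j : Fin n → ℕ), StrictMono i → StrictMono j →
    0 ≤ (Matrix.of fun p q : Fin n => if i p ≤ j q then a (j q - i p) else 0).det

/-- A real sequence is `m`-times positive (TP_m) if all such minors of order at most `m`
are nonnegative. -/
def IsMultiplyPositive (m : ℕ) (a : ℕ → ℝ) : Prop :=
  ∀ (n : ℕ), n ≤ m → ∀ (i j : Fin n → ℕ), StrictMono i → StrictMono j →
    0 ≤ (Matrix.of fun p q : Fin n => if i p ≤ j q then a (j q - i p) else 0).det

/-- A nonnegative sequence `(a_k)` is a TP_∞-preserver if for every totally positive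
sequence `(b_k)`, the sequence `(a_k b_k)` is totally positive. -/
def IsTPPreserver (a : ℕ → ℝ) : Prop :=
  ∀ b : ℕ → ℝ, IsTotallyPositive b → IsTotallyPositive (fun k => a k * b k)

/-!
A minor is linear in each column, so adding to a column a nonnegative multiple of the column
immediately before it keeps all minors nonnegative: the extra term is either a minor on another
increasing set of columns or has a repeated column. Performing this operation on all columns from
left to right multiplies the generating function of a Toeplitz matrix by `1 / (1 - c z)`. Starting
from the identity matrix, applying it with the ratios `c` and `1`, and deleting the first row, which
multiplies by `z`, one finds that `z / ((1 - c z) (1 - z)) = ∑ (c ^ k - 1) / (c - 1) z ^ k`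
generates a totally positive sequence, to which a preserver may be applied.
-/

theorem monotone_update_of_covBy {α κ : Type*} [PartialOrder α] [DecidableEq α] [LinearOrder κ]
    {j : α → κ} (hj : StrictMono j) {q : α} {k : κ} (hk : k ⋖ j q) :
    Monotone (Function.update j q k) := by
  refine monotone_iff_forall_lt.mpr fun r s hrs => ?_
  rcases eq_or_ne r q with rfl | hr
  · simpa [hrs.ne'] using (hk.lt.trans (hj hrs)).le
  · rcases eq_or_ne s q with rfl | hs
    · simpa [hr] using hk.le_of_lt (hj hrs)
    · simpa [hr, hs] using (hj hrs).le

theorem submatrix_updateCol_of_injective {ι ι' κ κ' R : Type*} [DecidableEq κ] [DecidableEq κ']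
    (A : Matrix ι κ R) (i : ι' → ι) {j : κ' → κ} (hj : Function.Injective j) (q : κ') (v : ι → R) :
    (A.updateCol (j q) v).submatrix i j = (A.submatrix i j).updateCol q (v ∘ i) := by
  ext r s
  simp [Matrix.updateCol_apply, hj.eq_iff]

theorem submatrix_update_right {ι ι' κ κ' R : Type*} [DecidableEq κ'] (A : Matrix ι κ R)
    (i : ι' → ι) (j : κ' → κ) (q : κ') (k : κ) :
    A.submatrix i (Function.update j q k) = (A.submatrix i j).updateCol q (A.col k ∘ i) := by
  ext r s
  by_cases hs : s = q <;> simp [hs]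

/-- A matrix with ordered rows and columns is totally nonnegative if all its minors are
nonnegative. This is the property that `IsTotallyPositive` asks of a Toeplitz matrix; in this
generality it can be propagated through operations that leave the Toeplitz form. -/
def IsTotallyNonneg {ι κ R : Type*} [Preorder ι] [Preorder κ] [CommRing R] [PartialOrder R]
    (A : Matrix ι κ R) : Prop :=
  ∀ (n : ℕ) (i : Fin n → ι) (j : Fin n → κ), StrictMono i → StrictMono j →
    0 ≤ (A.submatrix i j).det

namespace IsTotallyNonneg

variable {ι κ R : Type*} [CommRing R] [PartialOrder R]

theorem submatrix {ι' κ' : Type*} [Preorder ι] [Preorder κ] [Preorder ι'] [Preorder κ']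
    {A : Matrix ι κ R} (hA : IsTotallyNonneg A) {f : ι' → ι} {g : κ' → κ}
    (hf : StrictMono f) (hg : StrictMono g) : IsTotallyNonneg (A.submatrix f g) :=
  fun n i j hi hj => hA n (f ∘ i) (g ∘ j) (hf.comp hi) (hg.comp hj)

theorem one [LinearOrder κ] [ZeroLEOneClass R] : IsTotallyNonneg (1 : Matrix κ κ R) := by
  intro n i j hi hj
  by_cases hrange : Set.range i ⊆ Set.range j
  · have hcard : (Set.range j).ncard ≤ (Set.range i).ncard := by
      simp only [← Set.image_univ, Set.ncard_image_of_injective _ hi.injective,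
        Set.ncard_image_of_injective _ hj.injective, le_refl]
    obtain rfl : i = j :=
      (hi.range_inj hj).mp (Set.eq_of_subset_of_ncard_le hrange hcard)
    rw [Matrix.submatrix_one _ hi.injective, Matrix.det_one]
    exact zero_le_one
  · obtain ⟨_, ⟨p, rfl⟩, hp⟩ := Set.not_subset.mp hrange
    have hrow (q : Fin n) : (1 : Matrix κ κ R).submatrix i j p q = 0 :=
      Matrix.one_apply_ne fun h => hp ⟨q, h.symm⟩
    exact (Matrix.det_eq_zero_of_row_eq_zero p hrow).ge

theorem det_nonneg_of_monotone [Preorder ι] [PartialOrder κ] {A : Matrix ι κ R}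
    (hA : IsTotallyNonneg A) {n : ℕ} {i : Fin n → ι} {j : Fin n → κ} (hi : StrictMono i)
    (hj : Monotone j) : 0 ≤ (A.submatrix i j).det := by
  by_cases hinj : Function.Injective j
  · exact hA n i j hi (hj.strictMono_of_injective hinj)
  · obtain ⟨p, q, hpq, hne⟩ := Function.not_injective_iff.mp hinj
    exact (Matrix.det_zero_of_column_eq hne fun r => congrArg (A (i r)) hpq).ge

theorem updateCol_add_smul_of_covBy [Preorder ι] [LinearOrder κ] [IsOrderedRing R]
    {A : Matrix ι κ R} (hA : IsTotallyNonneg A) {k l : κ} (hkl : k ⋖ l) {c : R} (hc : 0 ≤ c) :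
    IsTotallyNonneg (A.updateCol l (A.col l + c • A.col k)) := by
  intro n i j hi hj
  by_cases hl : l ∈ Set.range j
  · obtain ⟨q, rfl⟩ := hl
    have hself : (A.submatrix i j).updateCol q ((A.submatrix i j).col q) = A.submatrix i j :=
      Matrix.updateCol_eq_self _ q
    have hdet : ((A.updateCol (j q) (A.col (j q) + c • A.col k)).submatrix i j).det =
        (A.submatrix i j).det + c * (A.submatrix i (Function.update j q k)).det := by
      calc
        _ = ((A.submatrix i j).updateCol q
              ((A.submatrix i j).col q + c • (A.col k ∘ i))).det :=
          congrArg Matrix.det (submatrix_updateCol_of_injective A i hj.injective q _)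
        _ = _ := by
          rw [Matrix.det_updateCol_add, Matrix.det_updateCol_smul, hself, submatrix_update_right]
    rw [hdet]
    exact add_nonneg (hA n i j hi hj) <| mul_nonneg hc <|
      hA.det_nonneg_of_monotone hi (monotone_update_of_covBy hj hkl)
  · have hsub : (A.updateCol l (A.col l + c • A.col k)).submatrix i j = A.submatrix i j := by
      ext r s
      exact Matrix.updateCol_ne fun h => hl ⟨s, h⟩
    exact hsub ▸ hA n i j hi hj

theorem of_col_recurrence [Preorder ι] [IsOrderedRing R] {A B : Matrix ι ℕ R} {c : ℕ → R}
    (hA : IsTotallyNonneg A) (hc : ∀ k, 0 ≤ c k) (hzero : B.col 0 = A.col 0)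
    (hsucc : ∀ k, B.col (k + 1) = A.col (k + 1) + c k • B.col k) : IsTotallyNonneg B := by
  -- The matrix obtained from `A` after the column operations into the columns `1, …, N`.
  let mixed (N : ℕ) : Matrix ι ℕ R := Matrix.of fun i k => if k ≤ N then B i k else A i k
  have hmixed_zero : mixed 0 = A := by
    ext i k
    rcases k.eq_zero_or_pos with rfl | hk
    · simpa [mixed] using congrFun hzero i
    · simp [mixed, hk.ne']
  have hmixed_succ (N : ℕ) : mixed (N + 1) =
      (mixed N).updateCol (N + 1) ((mixed N).col (N + 1) + c N • (mixed N).col N) := by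
    ext i k
    rcases eq_or_ne k (N + 1) with rfl | hk
    · simpa [mixed] using congrFun (hsucc N) i
    · simp [mixed, hk, Nat.le_add_one_iff]
  have hmixed (N : ℕ) : IsTotallyNonneg (mixed N) := by
    induction N with
    | zero => exact hmixed_zero ▸ hA
    | succ N ih =>
      exact hmixed_succ N ▸ ih.updateCol_add_smul_of_covBy (Order.covBy_add_one N) (hc N)
  intro n i j hi hj
  obtain ⟨N, hN⟩ := (Set.finite_range j).bddAbove
  have hsub : B.submatrix i j = (mixed N).submatrix i j := by
    ext p q
    simp [mixed, hN (Set.mem_range_self q)]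
  exact hsub ▸ hmixed N n i j hi hj

end IsTotallyNonneg

/-- The infinite upper triangular Toeplitz matrix `(a_{j-i})` of a sequence `a`, whose minors
define `IsTotallyPositive`. -/
def upperToeplitz {R : Type*} [Zero R] (a : ℕ → R) : Matrix ℕ ℕ R :=
  Matrix.of fun i j => if i ≤ j then a (j - i) else 0

section upperToeplitz

variable {R : Type*}

theorem upperToeplitz_single_zero_one [Zero R] [One R] :
    upperToeplitz (Pi.single 0 1 : ℕ → R) = 1 := by
  ext i j
  rcases lt_trichotomy i j with h | rfl | h
  · simp [upperToeplitz, Matrix.one_apply_ne h.ne, h.le, Nat.sub_ne_zero_of_lt h]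
  · simp [upperToeplitz]
  · simp [upperToeplitz, Matrix.one_apply_ne h.ne', h.not_ge]

theorem upperToeplitz_eq_submatrix_succ [Zero R] {a : ℕ → R} (hzero : a 0 = 0) :
    upperToeplitz a = (upperToeplitz fun k => a (k + 1)).submatrix Nat.succ id := by
  ext i j
  rcases lt_trichotomy i j with h | rfl | h
  · simp [upperToeplitz, h.le, Nat.succ_le_of_lt h, show j - (i + 1) + 1 = j - i by lia]
  · simp [upperToeplitz, hzero]
  · simp [upperToeplitz, h.not_ge, show ¬ i + 1 ≤ j by lia]

theorem upperToeplitz_col_zero [Zero R] {a b : ℕ → R} (hzero : b 0 = a 0) :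
    (upperToeplitz b).col 0 = (upperToeplitz a).col 0 := by
  ext i
  simp [upperToeplitz, hzero]

theorem upperToeplitz_col_succ [Semiring R] {a b : ℕ → R} {c : R} (hzero : b 0 = a 0)
    (hsucc : ∀ k, b (k + 1) = a (k + 1) + c * b k) (j : ℕ) :
    (upperToeplitz b).col (j + 1) =
      (upperToeplitz a).col (j + 1) + c • (upperToeplitz b).col j := by
  ext i
  rcases lt_trichotomy i (j + 1) with h | rfl | h
  · have hij : i ≤ j := Nat.le_of_lt_succ h
    simp [upperToeplitz, hij, h.le, Nat.succ_sub hij, hsucc]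
  · simp [upperToeplitz, hzero]
  · simp [upperToeplitz, h.not_ge, show ¬ i ≤ j by lia]

end upperToeplitz

theorem isTotallyPositive_iff_isTotallyNonneg {a : ℕ → ℝ} :
    IsTotallyPositive a ↔ IsTotallyNonneg (upperToeplitz a) :=
  Iff.rfl

theorem isTotallyPositive_single_zero_one : IsTotallyPositive (Pi.single 0 1) := by
  rw [isTotallyPositive_iff_isTotallyNonneg, upperToeplitz_single_zero_one]
  exact .one

theorem IsTotallyPositive.of_succ {a : ℕ → ℝ} (hzero : a 0 = 0)
    (ha : IsTotallyPositive fun k => a (k + 1)) : IsTotallyPositive a := by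
  rw [isTotallyPositive_iff_isTotallyNonneg] at ha ⊢
  rw [upperToeplitz_eq_submatrix_succ hzero]
  exact ha.submatrix Order.succ_strictMono strictMono_id

theorem IsTotallyPositive.of_recurrence {a b : ℕ → ℝ} {c : ℝ} (ha : IsTotallyPositive a)
    (hc : 0 ≤ c) (hzero : b 0 = a 0) (hsucc : ∀ k, b (k + 1) = a (k + 1) + c * b k) :
    IsTotallyPositive b := by
  rw [isTotallyPositive_iff_isTotallyNonneg] at ha ⊢
  exact ha.of_col_recurrence (fun _ => hc)
    (upperToeplitz_col_zero hzero) (upperToeplitz_col_succ hzero hsucc)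

theorem isTotallyPositive_pow {c : ℝ} (hc : 0 ≤ c) : IsTotallyPositive fun k => c ^ k :=
  isTotallyPositive_single_zero_one.of_recurrence hc (by simp) fun k => by simp [pow_succ']

theorem isTotallyPositive_geom_sum {c : ℝ} (hc : 0 ≤ c) :
    IsTotallyPositive fun k => ∑ m ∈ Finset.range k, c ^ m := by
  refine .of_succ (Finset.sum_range_zero _) ?_
  refine (isTotallyPositive_pow hc).of_recurrence zero_le_one (by simp) fun k => ?_
  rw [Finset.sum_range_succ, one_mul, add_comm]

/-- if `a` is a TP_∞-preserver then `((c^k-1)/(c-1) * a_k)` is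
totally positive, for every `c > 0`, `c ≠ 1`. -/
theorem stmt_8 (a : ℕ → ℝ) (ha : ∀ k, 0 ≤ a k) (hpres : IsTPPreserver a) :
    ∀ c : ℝ, 0 < c → c ≠ 1 →
      IsTotallyPositive (fun k => (c ^ k - 1) / (c - 1) * a k) := by
  intro c hc hc1
  have hgeom := hpres _ (isTotallyPositive_geom_sum hc.le)
  simpa only [geom_sum_eq hc1, mul_comm (a _)] using hgeom
end

section
/- Let a > 0, b > 0, and let (q_k)_{k=2}^∞ be positive reals. Assume: (i) both F(y) = 1 + a·y·(1 + y + y^2/b) and t(y) = y + y^2 + y^3/b have only real (necessarily nonpositive) zeros, and (ii) the sequence (c_k)_{k=0}^∞ with c_0 = c_1 = 1 and c_k = 1/(q_2^{k−1} q_3^{k−2} ⋯ q_{k−1}^2 q_k) for k ≥ 2 is totally positive. Then the cubic F_q(y) = 1 + q_2·a·y·(1 + y + y^2/(q_3 b)) has only real (nonpositive) zeros. -/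
/-!
Rescaling `y = q₂ z` turns `F_q` into the coefficientwise product
`Q(y) = 1 + a y + c₂ a y² + c₃ (a / b) y³` of `F` with `c`, where `c₂ ≤ 1`, `c₃ ≤ c₂²` and
`2 c₂ - 1 ≤ c₃` are three Toeplitz minors. Let `x < 0` be a zero of `F` that is at least the mean
`-b / 3` of the three zeros. Since `1 - c₃ ≤ 2 (1 - c₂)` and `|x| ≤ b / 2`, one gets
`Q(x) ≤ F(x) = 0`. Moreover `Q(0) > 0`, and the real zeros of `t`, which amount to `4 ≤ b`, make
`Q` positive at the vertex of the parabola `(Q(y) - 1) / y`, which lies to the left of `x`.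
These signs `+, -, +` rule out a nonreal zero of `Q`.
-/

open Polynomial

/-- A monic quadratic without real zeros is positive on `ℝ`, so a real polynomial of degree at most
three with a nonreal zero has the sign of an affine function. -/
theorem convex_setOf_eval_pos_of_natDegree_le_three {p : ℝ[X]} (hp : p.natDegree ≤ 3) {z : ℂ}
    (hz : aeval z p = 0) (him : z.im ≠ 0) : Convex ℝ {x | 0 < p.eval x} := by
  obtain ⟨l, rfl⟩ := p.quadratic_dvd_of_aeval_eq_zero_im_ne_zero hz him
  set s : ℝ[X] := X ^ 2 - C (2 * z.re) * X + C (‖z‖ ^ 2) with hs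
  have hs_monic : s.Monic := by rw [hs]; monicity!
  have hs_deg : s.natDegree = 2 := by rw [hs]; compute_degree!
  have hs_pos (x : ℝ) : 0 < s.eval x := by
    have : s.eval x = (x - z.re) ^ 2 + z.im ^ 2 := by
      simp only [hs, eval_add, eval_sub, eval_mul, eval_pow, eval_X, eval_C, Complex.sq_norm,
        Complex.normSq_apply]
      ring
    rw [this]
    positivity
  have hl_deg : l.natDegree ≤ 1 := by
    rcases eq_or_ne l 0 with rfl | hl
    · simp
    · rw [hs_monic.natDegree_mul' hl, hs_deg] at hp
      lia
  obtain ⟨m, n, rfl⟩ := exists_eq_X_add_C_of_natDegree_le_one hl_deg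
  have hset : {x | 0 < (s * (C m * X + C n)).eval x} = {x | -n < m • x} := by
    ext x
    simp [mul_pos_iff_of_pos_left (hs_pos x), neg_lt_iff_pos_add]
  rw [hset]
  exact convex_halfSpace_gt (IsLinearMap.isLinearMap_smul m) _

theorem splits_iff_forall_aeval_eq_zero_real {p : ℝ[X]} (hp : p ≠ 0) :
    p.Splits ↔ ∀ z : ℂ, aeval z p = 0 → ∃ x : ℝ, z = x := by
  constructor
  · intro h z hz
    obtain ⟨x, hx⟩ := h.mem_range_of_isRoot (i := algebraMap ℝ ℂ) hp (by simpa using hz)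
    exact ⟨x, hx.symm⟩
  · intro h
    refine (IsAlgClosed.splits (p.map (algebraMap ℝ ℂ))).of_splits_map _ fun z hz => ?_
    obtain ⟨x, rfl⟩ := h z (by simpa [hp] using hz)
    exact ⟨x, rfl⟩

theorem splits_of_natDegree_le_three_of_eval_pos_nonpos_pos {p : ℝ[X]} (hp : p.natDegree ≤ 3)
    {x y z : ℝ} (hxy : x ≤ y) (hyz : y ≤ z) (hx : 0 < p.eval x) (hy : p.eval y ≤ 0)
    (hz : 0 < p.eval z) : p.Splits := by
  have hp0 : p ≠ 0 := by rintro rfl; simp at hx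
  refine (splits_iff_forall_aeval_eq_zero_real hp0).2 fun w hw => ?_
  by_contra hreal
  have him : w.im ≠ 0 := fun h => hreal ⟨w.re, Complex.ext rfl h⟩
  have hconv := convex_setOf_eval_pos_of_natDegree_le_three hp hw him
  exact hy.not_gt (hconv.ordConnected.out hx hz ⟨hxy, hyz⟩)

theorem eval_toPoly {R : Type*} [CommSemiring R] (P : Cubic R) (x : R) :
    P.toPoly.eval x = P.a * x ^ 3 + P.b * x ^ 2 + P.c * x + P.d := by
  simp [Cubic.toPoly]

section OrderedField

variable {F : Type*} [Field F] [LinearOrder F] [IsStrictOrderedRing F] {P : Cubic F}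

theorem discr_nonneg_of_splits (ha : P.a ≠ 0) (h : P.toPoly.Splits) : 0 ≤ P.discr := by
  obtain ⟨x, y, z, hroots⟩ :=
    (Cubic.splits_iff_roots_eq_three (φ := RingHom.id F) ha).1 (by simpa using h)
  rw [← RingHom.id_apply P.discr, Cubic.discr_eq_prod_three_roots ha hroots]
  positivity

theorem exists_isRoot_ge_mean_of_splits (ha : P.a ≠ 0) (h : P.toPoly.Splits) :
    ∃ x, P.toPoly.IsRoot x ∧ -P.b / (3 * P.a) ≤ x := by
  obtain ⟨x, y, z, hroots⟩ :=
    (Cubic.splits_iff_roots_eq_three (φ := RingHom.id F) ha).1 (by simpa using h)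
  have hmean : -P.b / (3 * P.a) = (x + y + z) / 3 := by
    have hb := Cubic.b_eq_three_roots ha hroots
    rw [RingHom.id_apply, RingHom.id_apply] at hb
    rw [hb]
    field
  have hroot : ∀ w ∈ ({x, y, z} : Multiset F), P.toPoly.IsRoot w := by
    intro w hw
    rw [← hroots, Cubic.map_roots, Polynomial.map_id] at hw
    exact isRoot_of_mem_roots hw
  by_contra! hlt
  have hx := hlt x (hroot x (by simp))
  have hy := hlt y (hroot y (by simp))
  have hz := hlt z (hroot z (by simp))
  linarith

theorem nonpos_of_isRoot_toPoly (ha : 0 ≤ P.a) (hb : 0 ≤ P.b) (hc : 0 ≤ P.c) (hd : 0 < P.d)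
    {x : F} (hx : P.toPoly.IsRoot x) : x ≤ 0 := by
  by_contra! hx0
  rw [IsRoot, eval_toPoly] at hx
  have : 0 < P.a * x ^ 3 + P.b * x ^ 2 + P.c * x + P.d := by positivity
  exact this.ne' hx

end OrderedField

theorem splits_toPoly_iff_forall_complex_zero_real {P : Cubic ℝ} (hP : P.toPoly ≠ 0) :
    P.toPoly.Splits ↔
      ∀ z : ℂ, P.a * z ^ 3 + P.b * z ^ 2 + P.c * z + P.d = 0 → ∃ x : ℝ, z = x := by
  rw [splits_iff_forall_aeval_eq_zero_real hP]
  simp [Cubic.toPoly]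

theorem exists_nonpos_eq_ofReal_of_splits {P : Cubic ℝ} (ha : 0 ≤ P.a) (hb : 0 ≤ P.b) (hc : 0 ≤ P.c)
    (hd : 0 < P.d) (h : P.toPoly.Splits) {z : ℂ}
    (hz : P.a * z ^ 3 + P.b * z ^ 2 + P.c * z + P.d = 0) : ∃ x : ℝ, x ≤ 0 ∧ z = x := by
  obtain ⟨x, rfl⟩ := (splits_toPoly_iff_forall_complex_zero_real
    (Cubic.ne_zero_of_d_ne_zero hd.ne')).1 h z hz
  refine ⟨x, nonpos_of_isRoot_toPoly ha hb hc hd ?_, rfl⟩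
  rw [IsRoot, eval_toPoly]
  exact_mod_cast hz

theorem mul_cube_add_mul_sq_le {a b x γ δ : ℝ} (ha : 0 ≤ a) (hx : x ≤ 0) (hγ : γ ≤ 1)
    (hγδ : 2 * γ - 1 ≤ δ) (hab : -(2 * a * x) ≤ b) :
    δ * a * x ^ 3 + γ * b * x ^ 2 ≤ a * x ^ 3 + b * x ^ 2 := by
  have hax : 0 ≤ -(a * x) := neg_nonneg.2 (mul_nonpos_of_nonneg_of_nonpos ha hx)
  have hcoeff : (1 - δ) * -(a * x) ≤ (1 - γ) * b :=
    calc (1 - δ) * -(a * x) ≤ (2 * (1 - γ)) * -(a * x) :=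
          mul_le_mul_of_nonneg_right (by linarith) hax
      _ = (1 - γ) * -(2 * a * x) := by ring
      _ ≤ (1 - γ) * b := mul_le_mul_of_nonneg_left hab (sub_nonneg.2 hγ)
  linear_combination x ^ 2 * hcoeff

theorem eval_neg_div_two_mul_pos {P : Cubic ℝ} (ha : 0 < P.a) (hb : 0 ≤ P.b) (hd : 0 < P.d)
    (hdisc : 4 * P.a * P.c ≤ P.b ^ 2) : 0 < P.toPoly.eval (-(P.b / (2 * P.a))) := by
  have hvertex : P.toPoly.eval (-(P.b / (2 * P.a))) =
      P.b / (2 * P.a) * ((P.b ^ 2 - 4 * P.a * P.c) / (4 * P.a)) + P.d := by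
    rw [eval_toPoly]
    field
  rw [hvertex]
  have := sub_nonneg.2 hdisc
  positivity

theorem exists_isRoot_nonpos_of_splits {P : Cubic ℝ} (ha : 0 < P.a) (hb : 0 ≤ P.b) (hc : 0 ≤ P.c)
    (hd : 0 < P.d) (h : P.toPoly.Splits) :
    ∃ x ≤ 0, P.toPoly.IsRoot x ∧ -(3 * P.a * x) ≤ P.b := by
  obtain ⟨x, hx, hmean⟩ := exists_isRoot_ge_mean_of_splits ha.ne' h
  refine ⟨x, nonpos_of_isRoot_toPoly ha.le hb hc hd hx, hx, ?_⟩
  rw [div_le_iff₀ (by positivity)] at hmean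
  linarith

theorem splits_toPoly_mul_coeffs {P : Cubic ℝ} (ha : 0 < P.a) (hb : 0 ≤ P.b) (hc : 0 ≤ P.c)
    (hd : 0 < P.d) (hP : P.toPoly.Splits) (hdisc : 4 * P.a * P.c ≤ P.b ^ 2) {γ δ : ℝ}
    (hγ0 : 0 ≤ γ) (hδ0 : 0 < δ) (hγ1 : γ ≤ 1) (hδγ : δ ≤ γ ^ 2) (hγδ : 2 * γ - 1 ≤ δ) :
    (⟨δ * P.a, γ * P.b, P.c, P.d⟩ : Cubic ℝ).toPoly.Splits := by
  obtain ⟨x, hx0, hx, hab⟩ := exists_isRoot_nonpos_of_splits ha hb hc hd hP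
  have hax : 0 ≤ -(P.a * x) := neg_nonneg.2 (mul_nonpos_of_nonneg_of_nonpos ha.le hx0)
  set Q : Cubic ℝ := ⟨δ * P.a, γ * P.b, P.c, P.d⟩
  have hQa : 0 < Q.a := mul_pos hδ0 ha
  have hQdisc : 4 * Q.a * Q.c ≤ Q.b ^ 2 :=
    calc 4 * (δ * P.a) * P.c = δ * (4 * P.a * P.c) := by ring
      _ ≤ δ * P.b ^ 2 := by gcongr
      _ ≤ γ ^ 2 * P.b ^ 2 := by gcongr
      _ = (γ * P.b) ^ 2 := by ring
  have hvertex_le : -(Q.b / (2 * Q.a)) ≤ x := by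
    have hδ_le : δ ≤ γ := hδγ.trans (pow_le_of_le_one hγ0 hγ1 two_ne_zero)
    rw [neg_le, le_div_iff₀ (by positivity)]
    calc -x * (2 * (δ * P.a)) = δ * (2 * -(P.a * x)) := by ring
      _ ≤ γ * P.b := mul_le_mul hδ_le (by linarith) (by positivity) hγ0
  have hQx : Q.toPoly.eval x ≤ 0 := by
    rw [IsRoot, eval_toPoly] at hx
    rw [eval_toPoly]
    linarith [mul_cube_add_mul_sq_le (b := P.b) ha.le hx0 hγ1 hγδ (by linarith)]
  have hQ0 : 0 < Q.toPoly.eval 0 := by simpa [eval_toPoly] using hd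
  exact splits_of_natDegree_le_three_of_eval_pos_nonpos_pos
    (Cubic.natDegree_of_a_ne_zero hQa.ne').le hvertex_le hx0
    (eval_neg_div_two_mul_pos hQa (mul_nonneg hγ0 hb) hd hQdisc) hQx hQ0

section TotalPositivity

variable {c : ℕ → ℝ}

theorem IsMultiplyPositive.mono {m n : ℕ} (hmn : m ≤ n) (h : IsMultiplyPositive n c) :
    IsMultiplyPositive m c :=
  fun k hk => h k (hk.trans hmn)

theorem IsTotallyPositive.isMultiplyPositive (m : ℕ) (h : IsTotallyPositive c) :
    IsMultiplyPositive m c :=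
  fun n _ => h n

theorem IsMultiplyPositive.nonneg (h : IsMultiplyPositive 1 c) (k : ℕ) : 0 ≤ c k := by
  simpa using h 1 le_rfl ![0] ![k] (Subsingleton.strictMono _) (Subsingleton.strictMono _)

theorem IsMultiplyPositive.mul_le_sq (h : IsMultiplyPositive 2 c) (k : ℕ) :
    c k * c (k + 2) ≤ c (k + 1) ^ 2 := by
  have hminor := h 2 le_rfl ![0, 1] ![k + 1, k + 2] (by simp) (by simp)
  simpa [Matrix.det_fin_two, sq, mul_comm] using hminor

theorem IsMultiplyPositive.two_mul_le_add_cube (h : IsMultiplyPositive 3 c) :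
    2 * c 0 * c 1 * c 2 ≤ c 0 ^ 2 * c 3 + c 1 ^ 3 := by
  have hminor := h 3 le_rfl ![0, 1, 2] ![1, 2, 3] (by decide) (by decide)
  have hdet : 0 ≤ c 1 * c 1 * c 1 - c 1 * c 2 * c 0 - c 2 * c 0 * c 1 + c 3 * c 0 * c 0 := by
    simpa [Matrix.det_fin_three] using hminor
  linear_combination hdet

end TotalPositivity

theorem splits_toPoly_mul_coeffs_of_isMultiplyPositive {P : Cubic ℝ} (ha : 0 < P.a)
    (hb : 0 ≤ P.b) (hc : 0 ≤ P.c) (hd : 0 < P.d) (hP : P.toPoly.Splits)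
    (hdisc : 4 * P.a * P.c ≤ P.b ^ 2) {c : ℕ → ℝ} (hc0 : c 0 = 1) (hc1 : c 1 = 1) (hc3 : 0 < c 3)
    (htp : IsMultiplyPositive 3 c) :
    (⟨c 3 * P.a, c 2 * P.b, P.c, P.d⟩ : Cubic ℝ).toPoly.Splits := by
  have hlog := (htp.mono (m := 2) (by simp)).mul_le_sq
  have hc2_nonneg := (htp.mono (m := 1) (by simp)).nonneg 2
  have hc2_le : c 2 ≤ 1 := by simpa [hc0, hc1] using hlog 0
  have hc3_le : c 3 ≤ c 2 ^ 2 := by simpa [hc1] using hlog 1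
  have hc3_ge : 2 * c 2 - 1 ≤ c 3 := by
    simpa [hc0, hc1, sub_le_iff_le_add] using htp.two_mul_le_add_cube
  exact splits_toPoly_mul_coeffs ha hb hc hd hP hdisc hc2_nonneg hc3 hc2_le hc3_le hc3_ge

theorem four_le_of_forall_complex_zero_real {b : ℝ} (hb : 0 < b)
    (ht : ∀ z : ℂ, z + z ^ 2 + z ^ 3 / (b : ℂ) = 0 → ∃ x : ℝ, z = (x : ℂ)) : 4 ≤ b := by
  have hsplits : (⟨1 / b, 1, 1, 0⟩ : Cubic ℝ).toPoly.Splits := by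
    refine (splits_toPoly_iff_forall_complex_zero_real
      (Cubic.ne_zero_of_c_ne_zero one_ne_zero)).2 fun z hz => ht z ?_
    push_cast at hz
    linear_combination hz
  have hdiscr := discr_nonneg_of_splits (one_div_pos.2 hb).ne' hsplits
  have hdiscr_eq : (⟨1 / b, 1, 1, 0⟩ : Cubic ℝ).discr = 1 - 4 / b := by
    rw [Cubic.discr]
    ring
  rw [hdiscr_eq, sub_nonneg, div_le_one hb] at hdiscr
  exact hdiscr

theorem stmt_16_general {a b q₂ q₃ : ℝ} (ha : 0 < a) (hb : 0 < b) (hq₂ : 0 < q₂) (hq₃ : 0 < q₃)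
    (hF : ∀ z : ℂ, 1 + (a : ℂ) * z * (1 + z + z ^ 2 / (b : ℂ)) = 0 → ∃ x : ℝ, z = (x : ℂ))
    (ht : ∀ z : ℂ, z + z ^ 2 + z ^ 3 / (b : ℂ) = 0 → ∃ x : ℝ, z = (x : ℂ))
    {c : ℕ → ℝ} (hc0 : c 0 = 1) (hc1 : c 1 = 1) (hc2 : c 2 = 1 / q₂)
    (hc3 : c 3 = 1 / (q₂ ^ 2 * q₃)) (htp : IsMultiplyPositive 3 c) :
    ∀ z : ℂ, 1 + (q₂ : ℂ) * (a : ℂ) * z * (1 + z + z ^ 2 / ((q₃ : ℂ) * (b : ℂ))) = 0 →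
      ∃ x : ℝ, x ≤ 0 ∧ z = (x : ℂ) := by
  intro z hz
  have hP : (⟨a / b, a, a, 1⟩ : Cubic ℝ).toPoly.Splits := by
    refine (splits_toPoly_iff_forall_complex_zero_real
      (Cubic.ne_zero_of_d_ne_zero one_ne_zero)).2 fun w hw => hF w ?_
    push_cast at hw
    linear_combination hw
  have hdisc : 4 * (a / b) * a ≤ a ^ 2 :=
    calc 4 * (a / b) * a = 4 / b * a ^ 2 := by ring
      _ ≤ a ^ 2 := mul_le_of_le_one_left (sq_nonneg a)
        ((div_le_one hb).2 (four_le_of_forall_complex_zero_real hb ht))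
  have hc2_pos : 0 < c 2 := by rw [hc2]; positivity
  have hc3_pos : 0 < c 3 := by rw [hc3]; positivity
  have hQ := splits_toPoly_mul_coeffs_of_isMultiplyPositive (div_pos ha hb) ha.le ha.le one_pos
    hP hdisc hc0 hc1 hc3_pos htp
  have hq₂_ne : (q₂ : ℂ) ≠ 0 := Complex.ofReal_ne_zero.2 hq₂.ne'
  have hscaled : ((c 3 * (a / b) : ℝ) : ℂ) * (q₂ * z) ^ 3 + ((c 2 * a : ℝ) : ℂ) * (q₂ * z) ^ 2 +
      a * (q₂ * z) + (1 : ℝ) = 0 := by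
    rw [hc2, hc3, ← hz]
    push_cast
    field
  obtain ⟨x, hx0, hx⟩ := exists_nonpos_eq_ofReal_of_splits (mul_pos hc3_pos (div_pos ha hb)).le
    (mul_pos hc2_pos ha).le ha.le one_pos hQ hscaled
  refine ⟨x / q₂, div_nonpos_of_nonpos_of_nonneg hx0 hq₂.le, ?_⟩
  rw [Complex.ofReal_div, ← hx, mul_div_cancel_left₀ z hq₂_ne]

/-- if `F(y) = 1 + a·y·(1 + y + y²/b)` and `t(y) = y + y² + y³/b` have only
real zeros and the sequence `c_0 = c_1 = 1`, `c_k = 1/(q_2^{k-1} ⋯ q_k)` is totally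
positive, then `F_q(y) = 1 + q_2·a·y·(1 + y + y²/(q_3 b))` has only real nonpositive
zeros. -/
theorem stmt_16 (a b : ℝ) (ha : 0 < a) (hb : 0 < b)
    (q : ℕ → ℝ) (hq : ∀ k, 2 ≤ k → 0 < q k)
    (hF : ∀ z : ℂ, 1 + (a : ℂ) * z * (1 + z + z ^ 2 / (b : ℂ)) = 0 → ∃ x : ℝ, z = (x : ℂ))
    (ht : ∀ z : ℂ, z + z ^ 2 + z ^ 3 / (b : ℂ) = 0 → ∃ x : ℝ, z = (x : ℂ))
    (c : ℕ → ℝ) (hc0 : c 0 = 1) (hc1 : c 1 = 1)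
    (hck : ∀ k, 2 ≤ k → c k = 1 / ∏ j ∈ Finset.Icc 2 k, q j ^ (k + 1 - j))
    (htp : IsTotallyPositive c) :
    ∀ z : ℂ, 1 + (q 2 : ℂ) * (a : ℂ) * z * (1 + z + z ^ 2 / ((q 3 : ℂ) * (b : ℂ))) = 0 →
      ∃ x : ℝ, x ≤ 0 ∧ z = (x : ℂ) := by
  have hc2 : c 2 = 1 / q 2 := by simp [hck]
  have hc3 : c 3 = 1 / (q 2 ^ 2 * q 3) := by simp [hck, Finset.prod_Icc_succ_top]
  exact stmt_16_general ha hb (hq 2 le_rfl) (hq 3 (by simp)) hF ht hc0 hc1 hc2 hc3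
    (htp.isMultiplyPositive 3)
end
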